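/- arXiv:1705.00445 — 7 statements merged into one kernel-verified Lean document; each statement's English description precedes it below -/
import Mathlib

section
/- The seven ℤ-linear automorphisms s_0, s_1, s_2, s_3, s_4, σ_1, σ_2 of P satisfy the defining relations of the extended affine Weyl group of type D_4^(1): s_i∘s_i = id for i = 0,…,4; (s_i∘s_j)^2 = id for distinct i, j ∈ {0,1,3,4}; (s_i∘s_2)^3 = id = (s_2∘s_i)^3 for i ∈ {0,1,3,4}; σ_1∘σ_1 = id and σ_2∘σ_2 = id; σ_1∘s_0 = s_1∘σ_1, σ_1∘s_1 = s_0∘σ_1, σ_1∘s_2 = s_2∘σ_1, σ_1∘s_3 = s_4∘σ_1, σ_1∘s_4 = s_3∘σ_1; σ_2∘s_0 = s_3∘σ_2, σ_2∘s_1 = s_4∘σ_2, σ_2∘s_2 = s_2∘σ_2, σ_2∘s_3 = s_0∘σ_2, σ_2∘s_4 = s_1∘σ_2; and σ_1∘σ_2 = σ_2∘σ_1. -/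
/-!
Each relation is an identity between explicit `7 × 7` integer matrices. Since every `s_i` is an
involution, the order relations `(s_i s_j)^2 = 1` and `(s_i s_2)^3 = 1` follow from the
commutations `s_i s_j = s_j s_i` (nodes `i`, `j` not joined in the Dynkin diagram) and the braid
relations `s_i s_2 s_i = s_2 s_i s_2` (nodes `i` and `2` joined). These, the involutivity and the
relations with `σ_1`, `σ_2` involve products of at most three matrices and are checked entrywise.
-/

open Matrix

/-- `P = ℤ^7`, the free `ℤ`-module with basis `h_0, …, h_6`. -/
abbrev P7 : Type := Fin 7 → ℤ

/-- The basis vector `h_i` of `P`. -/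
def hv (i : Fin 7) : P7 := Pi.single i 1

/-- Matrix of `s_0` (columns = images of the basis vectors): `h_0 ↦ h_2 - h_0`. -/
def S0 : Matrix (Fin 7) (Fin 7) ℤ :=
  !![-1,0,0,0,0,0,0;
      0,1,0,0,0,0,0;
      1,0,1,0,0,0,0;
      0,0,0,1,0,0,0;
      0,0,0,0,1,0,0;
      0,0,0,0,0,1,0;
      0,0,0,0,0,0,1]

/-- Matrix of `s_1`: `h_1 ↦ h_2 - h_1`. -/
def S1 : Matrix (Fin 7) (Fin 7) ℤ :=
  !![1,0,0,0,0,0,0;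
     0,-1,0,0,0,0,0;
     0,1,1,0,0,0,0;
     0,0,0,1,0,0,0;
     0,0,0,0,1,0,0;
     0,0,0,0,0,1,0;
     0,0,0,0,0,0,1]

/-- Matrix of `s_2`: `h_2 ↦ h_0 + h_1 - h_2 + h_3 + h_4`. -/
def S2 : Matrix (Fin 7) (Fin 7) ℤ :=
  !![1,0,1,0,0,0,0;
     0,1,1,0,0,0,0;
     0,0,-1,0,0,0,0;
     0,0,1,1,0,0,0;
     0,0,1,0,1,0,0;
     0,0,0,0,0,1,0;
     0,0,0,0,0,0,1]

/-- Matrix of `s_3`: `h_3 ↦ h_2 - h_3`. -/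
def S3 : Matrix (Fin 7) (Fin 7) ℤ :=
  !![1,0,0,0,0,0,0;
     0,1,0,0,0,0,0;
     0,0,1,1,0,0,0;
     0,0,0,-1,0,0,0;
     0,0,0,0,1,0,0;
     0,0,0,0,0,1,0;
     0,0,0,0,0,0,1]

/-- Matrix of `s_4`: `h_4 ↦ h_2 - h_4`. -/
def S4 : Matrix (Fin 7) (Fin 7) ℤ :=
  !![1,0,0,0,0,0,0;
     0,1,0,0,0,0,0;
     0,0,1,0,1,0,0;
     0,0,0,1,0,0,0;
     0,0,0,0,-1,0,0;
     0,0,0,0,0,1,0;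
     0,0,0,0,0,0,1]

/-- Matrix of `σ_1`:
`(h_0,…,h_6) ↦ (h_1+h_5, h_0+h_5, h_2+2h_5, h_4+h_5, h_3+h_5, -h_5, h_6)`. -/
def Sig1 : Matrix (Fin 7) (Fin 7) ℤ :=
  !![0,1,0,0,0,0,0;
     1,0,0,0,0,0,0;
     0,0,1,0,0,0,0;
     0,0,0,0,1,0,0;
     0,0,0,1,0,0,0;
     1,1,2,1,1,-1,0;
     0,0,0,0,0,0,1]

/-- Matrix of `σ_2`:
`(h_0,…,h_6) ↦ (h_3+h_6, h_4+h_6, h_2+2h_6, h_0+h_6, h_1+h_6, h_5, -h_6)`. -/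
def Sig2 : Matrix (Fin 7) (Fin 7) ℤ :=
  !![0,0,0,1,0,0,0;
     0,0,0,0,1,0,0;
     0,0,1,0,0,0,0;
     1,0,0,0,0,0,0;
     0,1,0,0,0,0,0;
     0,0,0,0,0,1,0;
     1,1,2,1,1,0,-1]

/-- `σ_3 = σ_1 ∘ σ_2`. -/
def Sig3 : Matrix (Fin 7) (Fin 7) ℤ := Sig1 * Sig2

/-- The family `s_0, …, s_4`. -/
def Sm : Fin 5 → Matrix (Fin 7) (Fin 7) ℤ := ![S0, S1, S2, S3, S4]

lemma mul_sq_eq_one_of_commute {M : Type*} [Monoid M] {a b : M} (ha : a * a = 1)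
    (hb : b * b = 1) (h : a * b = b * a) : (a * b) ^ 2 = 1 := by
  have h' : Commute a b := h
  rw [h'.mul_pow, sq, sq, ha, hb, one_mul]

lemma mul_cube_eq_one_of_braid {M : Type*} [Monoid M] {a b : M} (ha : a * a = 1)
    (hb : b * b = 1) (h : a * b * a = b * a * b) : (a * b) ^ 3 = 1 := by
  calc (a * b) ^ 3 = (a * b * a) * (b * a * b) := by
        simp only [pow_succ, pow_zero, one_mul, mul_assoc]
    _ = a * (b * ((a * a) * (b * a))) := by rw [← h]; simp only [mul_assoc]
    _ = a * ((b * b) * a) := by rw [ha, one_mul, ← mul_assoc b b a]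
    _ = 1 := by rw [hb, one_mul, ha]

lemma Sm_mul_self : ∀ i : Fin 5, Sm i * Sm i = 1 := by decide +kernel

/-- The four outer nodes of the Dynkin diagram are pairwise not joined. -/
lemma Sm_commute : ∀ i j : Fin 5, i ≠ 2 → j ≠ 2 → Sm i * Sm j = Sm j * Sm i := by
  decide +kernel

/-- Every outer node of the Dynkin diagram is joined to the central node by a simple edge. -/
lemma Sm_braid : ∀ i : Fin 5, i ≠ 2 → Sm i * Sm 2 * Sm i = Sm 2 * Sm i * Sm 2 := by
  decide +kernel

/-- the seven linear automorphisms `s_0,…,s_4, σ_1, σ_2` of `P = ℤ^7`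
(realized as matrices acting by `mulVec`, so that composition is matrix product) satisfy
the defining relations of the extended affine Weyl group of type `D_4^(1)`. -/
theorem statement0 :
    (∀ i : Fin 5, Sm i * Sm i = 1) ∧
    (∀ i j : Fin 5, i ∈ ({0,1,3,4} : Set (Fin 5)) → j ∈ ({0,1,3,4} : Set (Fin 5)) →
      i ≠ j → (Sm i * Sm j) ^ 2 = 1) ∧
    (∀ i : Fin 5, i ∈ ({0,1,3,4} : Set (Fin 5)) →
      (Sm i * Sm 2) ^ 3 = 1 ∧ (Sm 2 * Sm i) ^ 3 = 1) ∧
    Sig1 * Sig1 = 1 ∧ Sig2 * Sig2 = 1 ∧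
    Sig1 * Sm 0 = Sm 1 * Sig1 ∧ Sig1 * Sm 1 = Sm 0 * Sig1 ∧ Sig1 * Sm 2 = Sm 2 * Sig1 ∧
    Sig1 * Sm 3 = Sm 4 * Sig1 ∧ Sig1 * Sm 4 = Sm 3 * Sig1 ∧
    Sig2 * Sm 0 = Sm 3 * Sig2 ∧ Sig2 * Sm 1 = Sm 4 * Sig2 ∧ Sig2 * Sm 2 = Sm 2 * Sig2 ∧
    Sig2 * Sm 3 = Sm 0 * Sig2 ∧ Sig2 * Sm 4 = Sm 1 * Sig2 ∧
    Sig1 * Sig2 = Sig2 * Sig1 := by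
  have outer : ∀ i : Fin 5, i ∈ ({0,1,3,4} : Set (Fin 5)) → i ≠ 2 := by
    rintro i hi rfl
    simp at hi
  refine ⟨Sm_mul_self, fun i j hi hj _ => ?_, fun i hi => ⟨?_, ?_⟩, ?_⟩
  · exact mul_sq_eq_one_of_commute (Sm_mul_self i) (Sm_mul_self j)
      (Sm_commute i j (outer i hi) (outer j hj))
  · exact mul_cube_eq_one_of_braid (Sm_mul_self i) (Sm_mul_self 2) (Sm_braid i (outer i hi))
  · exact mul_cube_eq_one_of_braid (Sm_mul_self 2) (Sm_mul_self i)
      (Sm_braid i (outer i hi)).symm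
  · decide +kernel
end

section
/- The five orbits M_0, M_1, M_2, M_3, M_4 are pairwise disjoint subsets of P. -/
/-! The orbits are separated by three `G`-invariant linear functionals modulo 2. Writing
`v = ∑ x_i h_i`, they are the level `x_0 + x_1 + 2 x_2 + x_3 + x_4`, and `x_0 + x_1 + x_6` and
`x_0 + x_3 + x_5`. The last two combine the class of the weight modulo the root lattice, which the
reflections `s_i` preserve, with the parities of `x_5` and `x_6`. At odd level, `σ_1` changes both
`x_0 + x_3` and `x_5` modulo 2, and `σ_2` changes both `x_0 + x_1` and `x_6`, while at even level
none of these change; so the sums are invariant (`invMat_mul`). The triples of values at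
`h_0, …, h_4` are pairwise distinct. -/

open Matrix

/-- Matrix of `s_0` acting on the coroot lattice `Q̌`:
`α̌_0 ↦ -α̌_0`, `α̌_2 ↦ α̌_2 + α̌_0`, other basis vectors fixed. -/
def C0 : Matrix (Fin 7) (Fin 7) ℤ :=
  !![-1,0,1,0,0,0,0;
      0,1,0,0,0,0,0;
      0,0,1,0,0,0,0;
      0,0,0,1,0,0,0;
      0,0,0,0,1,0,0;
      0,0,0,0,0,1,0;
      0,0,0,0,0,0,1]

/-- Matrix of `s_1` on `Q̌`. -/
def C1 : Matrix (Fin 7) (Fin 7) ℤ :=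
  !![1,0,0,0,0,0,0;
     0,-1,1,0,0,0,0;
     0,0,1,0,0,0,0;
     0,0,0,1,0,0,0;
     0,0,0,0,1,0,0;
     0,0,0,0,0,1,0;
     0,0,0,0,0,0,1]

/-- Matrix of `s_2` on `Q̌`: `α̌_2 ↦ -α̌_2`, `α̌_j ↦ α̌_j + α̌_2` for `j ∈ {0,1,3,4}`. -/
def C2 : Matrix (Fin 7) (Fin 7) ℤ :=
  !![1,0,0,0,0,0,0;
     0,1,0,0,0,0,0;
     1,1,-1,1,1,0,0;
     0,0,0,1,0,0,0;
     0,0,0,0,1,0,0;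
     0,0,0,0,0,1,0;
     0,0,0,0,0,0,1]

/-- Matrix of `s_3` on `Q̌`. -/
def C3 : Matrix (Fin 7) (Fin 7) ℤ :=
  !![1,0,0,0,0,0,0;
     0,1,0,0,0,0,0;
     0,0,1,0,0,0,0;
     0,0,1,-1,0,0,0;
     0,0,0,0,1,0,0;
     0,0,0,0,0,1,0;
     0,0,0,0,0,0,1]

/-- Matrix of `s_4` on `Q̌`. -/
def C4 : Matrix (Fin 7) (Fin 7) ℤ :=
  !![1,0,0,0,0,0,0;
     0,1,0,0,0,0,0;
     0,0,1,0,0,0,0;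
     0,0,0,1,0,0,0;
     0,0,1,0,-1,0,0;
     0,0,0,0,0,1,0;
     0,0,0,0,0,0,1]

/-- `s_0` on `P` as an invertible matrix (it is an involution). -/
def uS0 : (Matrix (Fin 7) (Fin 7) ℤ)ˣ := ⟨S0, S0, by decide, by decide⟩
/-- `s_1` on `P` as an invertible matrix. -/
def uS1 : (Matrix (Fin 7) (Fin 7) ℤ)ˣ := ⟨S1, S1, by decide, by decide⟩
/-- `s_2` on `P` as an invertible matrix. -/
def uS2 : (Matrix (Fin 7) (Fin 7) ℤ)ˣ := ⟨S2, S2, by decide, by decide⟩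
/-- `s_3` on `P` as an invertible matrix. -/
def uS3 : (Matrix (Fin 7) (Fin 7) ℤ)ˣ := ⟨S3, S3, by decide, by decide⟩
/-- `s_4` on `P` as an invertible matrix. -/
def uS4 : (Matrix (Fin 7) (Fin 7) ℤ)ˣ := ⟨S4, S4, by decide, by decide⟩
/-- `σ_1` on `P` as an invertible matrix. -/
def uSig1 : (Matrix (Fin 7) (Fin 7) ℤ)ˣ := ⟨Sig1, Sig1, by decide, by decide⟩
/-- `σ_2` on `P` as an invertible matrix. -/
def uSig2 : (Matrix (Fin 7) (Fin 7) ℤ)ˣ := ⟨Sig2, Sig2, by decide, by decide⟩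

/-- The group `G = ⟨s_0, …, s_4, σ_1, σ_2⟩` acting on `P`. -/
def G : Subgroup (Matrix (Fin 7) (Fin 7) ℤ)ˣ :=
  Subgroup.closure {uS0, uS1, uS2, uS3, uS4, uSig1, uSig2}

/-- The orbit `M_k = { w(h_k) : w ∈ G }` of the weight `h_k` under
`G = ⟨s_0,…,s_4,σ_1,σ_2⟩`, for `k = 0, …, 4`. -/
def Morb (k : Fin 5) : Set P7 :=
  {v | ∃ g ∈ G, (g : Matrix (Fin 7) (Fin 7) ℤ) *ᵥ hv (Fin.castLE (by omega) k) = v}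

/-- The rows are the invariant functionals modulo 2: the level, `x_0 + x_1 + x_6` and
`x_0 + x_3 + x_5`. -/
def invMat : Matrix (Fin 3) (Fin 7) (ZMod 2) :=
  !![1,1,0,1,1,0,0;
     1,1,0,0,0,0,1;
     1,0,0,1,0,1,0]

theorem invMat_mul {g : (Matrix (Fin 7) (Fin 7) ℤ)ˣ} (hg : g ∈ G) :
    invMat * (Int.castRingHom (ZMod 2)).mapMatrix (g : Matrix (Fin 7) (Fin 7) ℤ) = invMat := by
  induction hg using Subgroup.closure_induction with
  | mem x hx =>
    simp only [Set.mem_insert_iff, Set.mem_singleton_iff] at hx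
    rcases hx with rfl | rfl | rfl | rfl | rfl | rfl | rfl <;> decide
  | one => simp
  | mul x y _ _ hx hy => rw [Units.val_mul, map_mul, ← Matrix.mul_assoc, hx, hy]
  | inv x _ hx =>
    conv_lhs => rw [← hx]
    rw [Matrix.mul_assoc, ← map_mul, Units.mul_inv, map_one, Matrix.mul_one]

theorem invMat_mulVec {g : (Matrix (Fin 7) (Fin 7) ℤ)ˣ} (hg : g ∈ G) (v : P7) :
    invMat *ᵥ (Int.castRingHom (ZMod 2) ∘ ((g : Matrix (Fin 7) (Fin 7) ℤ) *ᵥ v)) =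
      invMat *ᵥ (Int.castRingHom (ZMod 2) ∘ v) := by
  have h : Int.castRingHom (ZMod 2) ∘ ((g : Matrix (Fin 7) (Fin 7) ℤ) *ᵥ v) =
      (Int.castRingHom (ZMod 2)).mapMatrix (g : Matrix (Fin 7) (Fin 7) ℤ) *ᵥ
        (Int.castRingHom (ZMod 2) ∘ v) :=
    funext fun i => RingHom.map_mulVec _ _ _ i
  rw [h, Matrix.mulVec_mulVec, invMat_mul hg]

theorem invMat_hv_ne : ∀ k l : Fin 5, k ≠ l →
    invMat *ᵥ (Int.castRingHom (ZMod 2) ∘ hv (Fin.castLE (by omega) k)) ≠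
      invMat *ᵥ (Int.castRingHom (ZMod 2) ∘ hv (Fin.castLE (by omega) l)) := by
  decide

/-- the five orbits `M_0, …, M_4` are pairwise disjoint subsets of `P`. -/
theorem statement3 :
    ∀ k l : Fin 5, k ≠ l → Disjoint (Morb k) (Morb l) := by
  intro k l hkl
  rw [Set.disjoint_left]
  rintro v ⟨g, hg, rfl⟩ ⟨g', hg', h⟩
  apply invMat_hv_ne k l hkl
  rw [← invMat_mulVec hg (hv _), ← h, invMat_mulVec hg']
end

section
/- For every w ∈ G and every k ∈ {0,1,3,4}, writing w(h_k) = n_0 h_0 + n_1 h_1 + n_2 h_2 + n_3 h_3 + n_4 h_4 + l h_5 + m h_6 with integer coefficients, one has n_0 + n_1 + 2n_2 + n_3 + n_4 = 1 and l ∈ {0,1} and m ∈ {0,1}. For every w ∈ G, writing w(h_2) = n_0 h_0 + n_1 h_1 + n_2 h_2 + n_3 h_3 + n_4 h_4 + l h_5 + m h_6, one has n_0 + n_1 + 2n_2 + n_3 + n_4 = 2 and l ∈ {0,2} and m ∈ {0,2}. -/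
/-!
The linear form `δ = n_0 + n_1 + 2 n_2 + n_3 + n_4` on `P` is fixed by every generator. The
coordinates `l` (along `h_5`) and `m` (along `h_6`) are fixed by all the `s_i`, while `σ_1` replaces
`l` by `δ - l` and keeps `m`, and `σ_2` replaces `m` by `δ - m` and keeps `l`. Hence for each `c` the
set of vectors with `δ = c`, `l ∈ {0, c}` and `m ∈ {0, c}` (`LevelSet`) is stable under `G`
(`levelSet_mulVec_iff`). The vectors `h_0, h_1, h_3, h_4` lie in it for `c = 1`, and `h_2` does for
`c = 2`.
-/

open Matrix

/-- The vectors `n_0 h_0 + ⋯ + n_4 h_4 + l h_5 + m h_6` of `P` with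
`n_0 + n_1 + 2 n_2 + n_3 + n_4 = c` and `l, m ∈ {0, c}`, as a predicate. -/
def LevelSet (c : ℤ) (v : P7) : Prop :=
  v 0 + v 1 + 2 * v 2 + v 3 + v 4 = c ∧ (v 5 = 0 ∨ v 5 = c) ∧ (v 6 = 0 ∨ v 6 = c)

/-- Stability is stated as an equivalence so that it passes to inverses of group elements. -/
theorem levelSet_mulVec_iff {g : (Matrix (Fin 7) (Fin 7) ℤ)ˣ} (hg : g ∈ G) (c : ℤ) (v : P7) :
    LevelSet c ((g : Matrix (Fin 7) (Fin 7) ℤ) *ᵥ v) ↔ LevelSet c v := by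
  unfold G at hg
  induction hg using Subgroup.closure_induction generalizing v with
  | mem x hx =>
    simp only [Set.mem_insert_iff, Set.mem_singleton_iff] at hx
    rcases hx with rfl | rfl | rfl | rfl | rfl | rfl | rfl <;>
    · simp [LevelSet, uS0, uS1, uS2, uS3, uS4, uSig1, uSig2, S0, S1, S2, S3, S4, Sig1, Sig2,
        Matrix.mulVec, dotProduct, Fin.sum_univ_succ]
      omega
  | one => simp
  | mul x y _ _ hx hy => rw [Units.val_mul, ← Matrix.mulVec_mulVec, hx, hy]
  | inv x _ hx => rw [← hx, Matrix.mulVec_mulVec, Units.mul_inv, Matrix.one_mulVec]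

/-- for every `w ∈ G`, writing
`w(h_k) = n_0 h_0 + ⋯ + n_4 h_4 + l h_5 + m h_6` (the coefficients being the
coordinates of the vector `w(h_k)`), one has: for `k ∈ {0,1,3,4}`,
`n_0 + n_1 + 2n_2 + n_3 + n_4 = 1`, `l ∈ {0,1}`, `m ∈ {0,1}`; and for `k = 2`,
`n_0 + n_1 + 2n_2 + n_3 + n_4 = 2`, `l ∈ {0,2}`, `m ∈ {0,2}`. -/
theorem statement4 :
    ∀ g ∈ G,
      (∀ k : Fin 7, k ∈ ({0,1,3,4} : Set (Fin 7)) →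
        (let v := (g : Matrix (Fin 7) (Fin 7) ℤ) *ᵥ hv k
         v 0 + v 1 + 2 * v 2 + v 3 + v 4 = 1 ∧ (v 5 = 0 ∨ v 5 = 1) ∧ (v 6 = 0 ∨ v 6 = 1))) ∧
      (let v := (g : Matrix (Fin 7) (Fin 7) ℤ) *ᵥ hv 2
       v 0 + v 1 + 2 * v 2 + v 3 + v 4 = 2 ∧ (v 5 = 0 ∨ v 5 = 2) ∧ (v 6 = 0 ∨ v 6 = 2)) := by
  intro g hg
  refine ⟨fun k hk => (levelSet_mulVec_iff hg 1 (hv k)).2 ?_,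
    (levelSet_mulVec_iff hg 2 (hv 2)).2 ?_⟩
  · simp only [Set.mem_insert_iff, Set.mem_singleton_iff] at hk
    rcases hk with rfl | rfl | rfl | rfl <;> simp [LevelSet, hv]
  · simp [LevelSet, hv]
end

section
/- For each k ∈ {0,1,3,4}, the ℤ-linear projection p : P → ℤ^5 sending c_0 h_0 + ⋯ + c_4 h_4 + c_5 h_5 + c_6 h_6 to (c_0, c_1, c_2, c_3, c_4) is injective on the orbit M_k; in particular two elements of M_k with the same h_0,…,h_4-coefficients are equal. -/
/-!
Write `c_i` for the coordinates. The level `c_0 + c_1 + 2 c_2 + c_3 + c_4` is `G`-invariant and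
equals `1` at `h_0, h_1, h_3, h_4`. On the level-one hyperplane `σ_1` acts on the `h_5`-coordinate
by `c_5 ↦ 1 - c_5` and `σ_2` on the `h_6`-coordinate by `c_6 ↦ 1 - c_6`, while every other
generator fixes these coordinates; so on the orbit `c_5, c_6 ∈ {0, 1}`.

The parities of `c_0 + c_3` and `c_0 + c_1` vanish on the `D_4^{(1)}` simple roots
`α_i = h_i - s_i(h_i)`. Since `s_i` subtracts `c_i α_i`, they are fixed by the reflections
`s_i`. On level one `σ_1` flips the first and fixes the second, and `σ_2` does the opposite. Hence
`c_5 + c_0 + c_3` and `c_6 + c_0 + c_1` are constant modulo `2` on the orbit, and `c_5, c_6` are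
determined by `c_0, …, c_4`. These conditions are collected in `OrbitInv`, whose invariance under
`G` is `orbitInv_iff_of_mem`.
-/

open Matrix

/-- The projection `p : P → ℤ^5` remembering only the `h_0, …, h_4`-coefficients. -/
def proj (v : P7) : Fin 5 → ℤ := fun i => v (Fin.castLE (by omega) i)

/-- The vectors of level one with `h_5`- and `h_6`-coordinates in `{0, 1}` for which
`c_5 + c_0 + c_3` and `c_6 + c_0 + c_1` have the parities of `r` and `s`. -/
def OrbitInv (r s : ℤ) (v : P7) : Prop :=
  v 0 + v 1 + 2 * v 2 + v 3 + v 4 = 1 ∧ (v 5 = 0 ∨ v 5 = 1) ∧ (v 6 = 0 ∨ v 6 = 1) ∧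
    (v 5 + v 0 + v 3) % 2 = r % 2 ∧ (v 6 + v 0 + v 1) % 2 = s % 2

/-- An equivalence rather than an implication, so that inverses cost nothing. -/
theorem orbitInv_iff_of_mem {g : (Matrix (Fin 7) (Fin 7) ℤ)ˣ} (hg : g ∈ G) (r s : ℤ) :
    ∀ v, OrbitInv r s v ↔ OrbitInv r s ((g : Matrix (Fin 7) (Fin 7) ℤ) *ᵥ v) := by
  unfold G at hg
  induction hg using Subgroup.closure_induction with
  | mem x hx =>
    intro v
    simp only [Set.mem_insert_iff, Set.mem_singleton_iff] at hx
    rcases hx with rfl | rfl | rfl | rfl | rfl | rfl | rfl <;>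
      simp [OrbitInv, uS0, uS1, uS2, uS3, uS4, uSig1, uSig2, S0, S1, S2, S3, S4, Sig1, Sig2,
        Matrix.mulVec, dotProduct, Fin.sum_univ_succ] <;>
      omega
  | one => simp
  | mul x y _ _ hx hy =>
    intro v
    rw [Units.val_mul, ← Matrix.mulVec_mulVec, ← hx, ← hy]
  | inv x _ hx =>
    intro v
    rw [hx (_ *ᵥ v), Matrix.mulVec_mulVec, Units.mul_inv, Matrix.one_mulVec]

/-- for each `k ∈ {0,1,3,4}`, the projection `p` forgetting the
`h_5`- and `h_6`-coefficients is injective on the orbit `M_k`; in particular two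
elements of `M_k` with the same `h_0,…,h_4`-coefficients are equal. -/
theorem statement5 :
    ∀ k : Fin 5, k ∈ ({0,1,3,4} : Set (Fin 5)) → Set.InjOn proj (Morb k) := by
  intro k hk v hvk w hw hvw
  have key : ∀ u ∈ Morb k,
      OrbitInv (hv (Fin.castLE (by omega) k) 0 + hv (Fin.castLE (by omega) k) 3)
        (hv (Fin.castLE (by omega) k) 0 + hv (Fin.castLE (by omega) k) 1) u := by
    rintro u ⟨g, hg, rfl⟩
    refine (orbitInv_iff_of_mem hg _ _ _).1 ?_
    simp only [Set.mem_insert_iff, Set.mem_singleton_iff] at hk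
    rcases hk with rfl | rfl | rfl | rfl <;> simp +decide [OrbitInv]
  obtain ⟨-, h5, h6, hr, hs⟩ := key v hvk
  obtain ⟨-, h5', h6', hr', hs'⟩ := key w hw
  have e0 : v 0 = w 0 := congrFun hvw 0
  have e1 : v 1 = w 1 := congrFun hvw 1
  have e2 : v 2 = w 2 := congrFun hvw 2
  have e3 : v 3 = w 3 := congrFun hvw 3
  have e4 : v 4 = w 4 := congrFun hvw 4
  -- Two elements of `{0, 1}` with the same parity are equal.
  have e5 : v 5 = w 5 := by omega
  have e6 : v 6 = w 6 := by omega
  funext i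
  fin_cases i <;> assumption
end

section
/- Projective reduction: for each i ∈ {0,1,2}, the square ρ_i^2 is a translation while ρ_i itself is not; precisely, setting δ = a_0+a_1+2a_2+a_3+a_4, for every v ∈ V one has ρ_i^2(v) − v ∈ ℤδ, but there exists v ∈ V with ρ_i(v) − v ∉ ℤδ. -/
/-!
Each `ρ_i ^ 2` differs from the identity by a rank-one matrix `δ c_iᵀ`, so
`ρ_i ^ 2 (v) - v = (c_i ⬝ v) δ`. On the other hand all three `ρ_i` send `a_0` to
`a_0 + a_2 + a_3 + a_4`, so `ρ_i(a_0) - a_0 = μ_1` has `a_0`-coefficient `0` and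
`a_2`-coefficient `1`, hence is not a multiple of `δ`.
-/

open Matrix

/-- `V = ℤ^5`, the free `ℤ`-module with basis `a_0, …, a_4`. -/
abbrev V5 : Type := Fin 5 → ℤ

/-- The generalized Cartan matrix of type `D_4^(1)`. -/
def Amat : Matrix (Fin 5) (Fin 5) ℤ :=
  !![2,0,-1,0,0;
     0,2,-1,0,0;
     -1,-1,2,-1,-1;
     0,0,-1,2,0;
     0,0,-1,0,2]

/-- Matrix of `s_0` on `V`: `s_0(a_j) = a_j - A_{0j} a_0`. -/
def T0 : Matrix (Fin 5) (Fin 5) ℤ :=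
  !![-1,0,1,0,0;
      0,1,0,0,0;
      0,0,1,0,0;
      0,0,0,1,0;
      0,0,0,0,1]

/-- Matrix of `s_1` on `V`. -/
def T1 : Matrix (Fin 5) (Fin 5) ℤ :=
  !![1,0,0,0,0;
     0,-1,1,0,0;
     0,0,1,0,0;
     0,0,0,1,0;
     0,0,0,0,1]

/-- Matrix of `s_2` on `V`. -/
def T2 : Matrix (Fin 5) (Fin 5) ℤ :=
  !![1,0,0,0,0;
     0,1,0,0,0;
     1,1,-1,1,1;
     0,0,0,1,0;
     0,0,0,0,1]

/-- Matrix of `s_3` on `V`. -/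
def T3 : Matrix (Fin 5) (Fin 5) ℤ :=
  !![1,0,0,0,0;
     0,1,0,0,0;
     0,0,1,0,0;
     0,0,1,-1,0;
     0,0,0,0,1]

/-- Matrix of `s_4` on `V`. -/
def T4 : Matrix (Fin 5) (Fin 5) ℤ :=
  !![1,0,0,0,0;
     0,1,0,0,0;
     0,0,1,0,0;
     0,0,0,1,0;
     0,0,1,0,-1]

/-- Matrix of `σ_1 : (a_0,a_1,a_2,a_3,a_4) ↦ (a_1,a_0,a_2,a_4,a_3)`. -/
def Sg1 : Matrix (Fin 5) (Fin 5) ℤ :=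
  !![0,1,0,0,0;
     1,0,0,0,0;
     0,0,1,0,0;
     0,0,0,0,1;
     0,0,0,1,0]

/-- Matrix of `σ_2 : (a_0,a_1,a_2,a_3,a_4) ↦ (a_3,a_4,a_2,a_0,a_1)`. -/
def Sg2 : Matrix (Fin 5) (Fin 5) ℤ :=
  !![0,0,0,1,0;
     0,0,0,0,1;
     0,0,1,0,0;
     1,0,0,0,0;
     0,1,0,0,0]

/-- `σ_3 = σ_1 ∘ σ_2`. -/
def Sg3 : Matrix (Fin 5) (Fin 5) ℤ := Sg1 * Sg2

/-- `s_{β0} = s_4 s_3 s_1 s_0 s_2 s_4 s_3 s_1 s_0` (leftmost factor applied last). -/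
def sb0 : Matrix (Fin 5) (Fin 5) ℤ := T4 * T3 * T1 * T0 * T2 * T4 * T3 * T1 * T0
/-- `s_{β1} = s_2`. -/
def sb1 : Matrix (Fin 5) (Fin 5) ℤ := T2
/-- `s_{γ0} = s_0 s_3 s_2 s_0 s_3`. -/
def sg0 : Matrix (Fin 5) (Fin 5) ℤ := T0 * T3 * T2 * T0 * T3
/-- `s_{γ1} = s_1 s_4 s_2 s_1 s_4`. -/
def sg1 : Matrix (Fin 5) (Fin 5) ℤ := T1 * T4 * T2 * T1 * T4
/-- `s_{ζ0} = σ_2 s_1 s_3 s_2 s_1 s_3 σ_2`. -/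
def sz0 : Matrix (Fin 5) (Fin 5) ℤ := Sg2 * T1 * T3 * T2 * T1 * T3 * Sg2
/-- `s_{ζ1} = s_1 s_3 s_2 s_1 s_3`. -/
def sz1 : Matrix (Fin 5) (Fin 5) ℤ := T1 * T3 * T2 * T1 * T3
/-- `s_{μ0} = s_0 s_1 s_2 s_0 s_1`. -/
def sm0 : Matrix (Fin 5) (Fin 5) ℤ := T0 * T1 * T2 * T0 * T1
/-- `s_{μ1} = s_3 s_4 s_2 s_3 s_4`. -/
def sm1 : Matrix (Fin 5) (Fin 5) ℤ := T3 * T4 * T2 * T3 * T4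
/-- `π_{βγ} = σ_2 s_4 s_3 s_1 s_0`. -/
def pbg : Matrix (Fin 5) (Fin 5) ℤ := Sg2 * T4 * T3 * T1 * T0
/-- `π_{βζ} = σ_3 s_4 s_3 s_1 s_0`. -/
def pbz : Matrix (Fin 5) (Fin 5) ℤ := Sg3 * T4 * T3 * T1 * T0
/-- `π_{βμ} = σ_1 s_4 s_3 s_1 s_0`. -/
def pbm : Matrix (Fin 5) (Fin 5) ℤ := Sg1 * T4 * T3 * T1 * T0
/-- `π_{γζ} = σ_1`. -/
def pgz : Matrix (Fin 5) (Fin 5) ℤ := Sg1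
/-- `π_{γμ} = σ_3`. -/
def pgm : Matrix (Fin 5) (Fin 5) ℤ := Sg3
/-- `π_{ζμ} = σ_2`. -/
def pzm : Matrix (Fin 5) (Fin 5) ℤ := Sg2
/-- `r_1 = s_1 s_4`. -/
def r1 : Matrix (Fin 5) (Fin 5) ℤ := T1 * T4
/-- `r_2 = s_1 s_3`. -/
def r2 : Matrix (Fin 5) (Fin 5) ℤ := T1 * T3
/-- `r_3 = s_3 s_4`. -/
def r3 : Matrix (Fin 5) (Fin 5) ℤ := T3 * T4
/-- `ρ_1 = s_{β0} π_{βμ}`. -/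
def rho1 : Matrix (Fin 5) (Fin 5) ℤ := sb0 * pbm
/-- `ρ_2 = s_{γ0} π_{γμ}`. -/
def rho2 : Matrix (Fin 5) (Fin 5) ℤ := sg0 * pgm
/-- `ρ_0 = s_{ζ0} π_{ζμ}`. -/
def rho0 : Matrix (Fin 5) (Fin 5) ℤ := sz0 * pzm

/-- `δ = a_0 + a_1 + 2a_2 + a_3 + a_4`. -/
def dl : V5 := ![1,1,2,1,1]
/-- `β_1 = a_2`. -/
def be1 : V5 := ![0,0,1,0,0]
/-- `γ_1 = a_1 + a_2 + a_4`. -/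
def ga1 : V5 := ![0,1,1,0,1]
/-- `ζ_1 = a_1 + a_2 + a_3`. -/
def ze1 : V5 := ![0,1,1,1,0]
/-- `μ_1 = a_2 + a_3 + a_4`. -/
def mu1 : V5 := ![0,0,1,1,1]
/-- `β_0 = δ - β_1`. -/
def be0 : V5 := dl - be1
/-- `γ_0 = δ - γ_1`. -/
def ga0 : V5 := dl - ga1
/-- `ζ_0 = δ - ζ_1`. -/
def ze0 : V5 := dl - ze1
/-- `μ_0 = δ - μ_1`. -/
def mu0 : V5 := dl - mu1

/-- The family `ρ_0, ρ_1, ρ_2`. -/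
def rho : Fin 3 → Matrix (Fin 5) (Fin 5) ℤ := ![rho0, rho1, rho2]

/-- The linear form `c_i` with `ρ_i ^ 2 (v) = v + c_i(v) δ`, as a row of coefficients. -/
def shift : Fin 3 → V5 := ![![1,-1,0,-1,1], ![1,1,-2,1,1], ![1,-1,0,1,-1]]

lemma rho_sq (i : Fin 3) : rho i ^ 2 = 1 + vecMulVec dl (shift i) := by
  rw [pow_two]
  revert i
  decide +kernel

lemma rho_mulVec_a0 (i : Fin 3) :
    rho i *ᵥ ![1,0,0,0,0] - ![1,0,0,0,0] = mu1 := by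
  revert i
  decide +kernel

/-- projective reduction: for each `i ∈ {0,1,2}`, `ρ_i^2` is a
translation, i.e. `ρ_i^2(v) - v ∈ ℤδ` for every `v ∈ V`, while `ρ_i` itself is not:
some `v ∈ V` has `ρ_i(v) - v ∉ ℤδ`. -/
theorem statement8 :
    ∀ i : Fin 3,
      (∀ v : V5, ∃ n : ℤ, (rho i) ^ 2 *ᵥ v - v = n • dl) ∧
      (∃ v : V5, ∀ n : ℤ, rho i *ᵥ v - v ≠ n • dl) := by
  intro i
  refine ⟨fun v => ⟨shift i ⬝ᵥ v, ?_⟩, ![1,0,0,0,0], fun n h => ?_⟩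
  · rw [rho_sq, add_mulVec, one_mulVec, vecMulVec_mulVec, add_sub_cancel_left, op_smul_eq_smul]
  · rw [rho_mulVec_a0] at h
    have h0 := congrFun h 0
    have h2 := congrFun h 2
    simp [mu1, dl] at h0 h2
    omega
end

section
/- The composite maps satisfy, as identities of ℤ-linear automorphisms of V, the fundamental relations of the extended affine Weyl group of type 4A_1^(1): s_{β0}^2 = s_{β1}^2 = s_{γ0}^2 = s_{γ1}^2 = s_{ζ0}^2 = s_{ζ1}^2 = s_{μ0}^2 = s_{μ1}^2 = id; reflections attached to different letters commute, i.e. s_{β_i}∘s_{γ_j} = s_{γ_j}∘s_{β_i} for all i, j ∈ {0,1}, and likewise for the letter pairs (β,ζ), (β,μ), (γ,ζ), (γ,μ), (ζ,μ); π_{βγ}^2 = π_{βζ}^2 = π_{βμ}^2 = π_{γζ}^2 = π_{γμ}^2 = π_{ζμ}^2 = id; π_{γζ} = π_{βγ}∘π_{βζ}, π_{γμ} = π_{βγ}∘π_{βμ}, π_{ζμ} = π_{βζ}∘π_{βμ}, and π_{βγ}, π_{βζ}, π_{βμ} commute pairwise; r_1^2 = r_2^2 = r_3^2 = id and r_3 =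 r_1∘r_2 = r_2∘r_1; π_{βγ}∘s_{β_i} = s_{β_{1−i}}∘π_{βγ}, π_{βγ}∘s_{γ_i} = s_{γ_{1−i}}∘π_{βγ}, π_{βγ}∘s_{ζ_i} = s_{ζ_i}∘π_{βγ}, π_{βγ}∘s_{μ_i} = s_{μ_i}∘π_{βγ}, with the analogous conjugation rules for π_{βζ} (flipping β- and ζ-indices) and π_{βμ} (flipping β- and μ-indices); and r_1∘s_{β_i} = s_{γ_i}∘r_1, r_1∘s_{γ_i} = s_{β_i}∘r_1, r_1∘s_{ζ_i} = s_{μ_i}∘r_1, r_1∘s_{μ_i} = s_{ζ_i}∘r_1, r_2∘s_{β_i} = s_{ζ_i}∘r_2, r_2∘s_{ζ_i} = s_{β_i}∘r_2, r_2∘s_{γ_i} = s_{μ_i}∘r_2, r_2∘s_{μ_i} = s_{γ_i}∘r_2 for i ∈ {0,1}. -/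
/-!
All relations are consequences of two facts about the symmetric form `(·, ·)` on `V` with Gram
matrix `Amat`: an isometry `g` satisfies `g s_α = s_{g α} g`, where `s_α` is the reflection in `α`, and
reflections in orthogonal vectors commute.

Each of `s_{β i}, s_{γ i}, s_{ζ i}, s_{μ i}` is a conjugate `g s_2 g⁻¹` with `g` an isometry, hence is
the reflection in the root `g a_2`, which turns out to be the root `β_i, γ_i, ζ_i, μ_i` it is named
after. These roots have square length `2`, and since `δ` spans the radical of the form, roots
attached to different letters are orthogonal because `β_1, γ_1, ζ_1, μ_1` are; this gives the
involution and commutation relations. The maps `π` and `r` are isometries permuting the eight roots,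
so the conjugation rules reduce to their action on these roots. The relations among the `π`
themselves follow because `s_4 s_3 s_1 s_0` is an involution commuting with the diagram automorphisms
`σ_i`, which form a Klein four-group; those among the `r` follow because `s_1, s_3, s_4` are
commuting involutions.
-/

open Matrix

/-- The pair `s_{β0}, s_{β1}`. -/
def sB : Fin 2 → Matrix (Fin 5) (Fin 5) ℤ := ![sb0, sb1]
/-- The pair `s_{γ0}, s_{γ1}`. -/
def sG : Fin 2 → Matrix (Fin 5) (Fin 5) ℤ := ![sg0, sg1]
/-- The pair `s_{ζ0}, s_{ζ1}`. -/
def sZ : Fin 2 → Matrix (Fin 5) (Fin 5) ℤ := ![sz0, sz1]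
/-- The pair `s_{μ0}, s_{μ1}`. -/
def sM : Fin 2 → Matrix (Fin 5) (Fin 5) ℤ := ![sm0, sm1]

/-! ### Reflections and isometries -/

/-- The reflection `v ↦ v - (α, v) α`, where `(·, ·)` is the bilinear form with Gram matrix
`Amat`; it is the orthogonal reflection in `α` when `(α, α) = 2`. -/
def rootRefl (α : V5) : Matrix (Fin 5) (Fin 5) ℤ := 1 - vecMulVec α (α ᵥ* Amat)

/-- `g` preserves the bilinear form with Gram matrix `Amat`. -/
def IsIsom (g : Matrix (Fin 5) (Fin 5) ℤ) : Prop := gᵀ * Amat * g = Amat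

lemma IsIsom.mul {g h : Matrix (Fin 5) (Fin 5) ℤ} (hg : IsIsom g) (hh : IsIsom h) :
    IsIsom (g * h) := by
  unfold IsIsom at *
  calc (g * h)ᵀ * Amat * (g * h) = hᵀ * (gᵀ * Amat * g) * h := by
        simp only [transpose_mul, Matrix.mul_assoc]
    _ = Amat := by rw [hg, hh]

/-- An isometry conjugates the reflection in `α` into the reflection in `g α`. -/
lemma IsIsom.mul_rootRefl {g : Matrix (Fin 5) (Fin 5) ℤ} (hg : IsIsom g) {α β : V5}
    (h : g *ᵥ α = β) : g * rootRefl α = rootRefl β * g := by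
  subst h
  have key : ((g *ᵥ α) ᵥ* Amat) ᵥ* g = α ᵥ* Amat := by
    rw [← vecMul_transpose, vecMul_vecMul, vecMul_vecMul, ← Matrix.mul_assoc, hg]
  rw [rootRefl, rootRefl, Matrix.mul_sub, Matrix.sub_mul, Matrix.mul_one, Matrix.one_mul,
    mul_vecMulVec, vecMulVec_mul, key]

/-- A real root, `(α, α) = 2`, gives an involution. -/
lemma rootRefl_mul_self {α : V5} (h : (α ᵥ* Amat) ⬝ᵥ α = 2) : rootRefl α * rootRefl α = 1 := by
  simp only [rootRefl, Matrix.mul_sub, Matrix.sub_mul, Matrix.mul_one, Matrix.one_mul,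
    vecMulVec_mul_vecMulVec, h, two_smul, vecMulVec_add]
  abel

/-- Reflections in orthogonal roots commute. -/
lemma rootRefl_comm {α β : V5} (h : (α ᵥ* Amat) ⬝ᵥ β = 0) (h' : (β ᵥ* Amat) ⬝ᵥ α = 0) :
    rootRefl α * rootRefl β = rootRefl β * rootRefl α := by
  simp only [rootRefl, Matrix.mul_sub, Matrix.sub_mul, Matrix.mul_one, Matrix.one_mul,
    vecMulVec_mul_vecMulVec, h, h', zero_smul, vecMulVec_zero]
  abel

/-- Conjugating the simple reflection `s_2` by an isometry `g` with inverse `k`. -/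
lemma IsIsom.conj_T2 {g k : Matrix (Fin 5) (Fin 5) ℤ} (hg : IsIsom g) (h1 : g * k = 1)
    {β : V5} (h : g *ᵥ be1 = β) : g * T2 * k = rootRefl β := by
  have h2 : T2 = rootRefl be1 := by decide
  rw [h2, hg.mul_rootRefl h, Matrix.mul_assoc, h1, Matrix.mul_one]

/-! ### The eight roots -/

/-- The pair of roots `β_0, β_1`. -/
def rB : Fin 2 → V5 := ![be0, be1]
/-- The pair of roots `γ_0, γ_1`. -/
def rG : Fin 2 → V5 := ![ga0, ga1]
/-- The pair of roots `ζ_0, ζ_1`. -/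
def rZ : Fin 2 → V5 := ![ze0, ze1]
/-- The pair of roots `μ_0, μ_1`. -/
def rM : Fin 2 → V5 := ![mu0, mu1]

/-- The product `s_4 s_3 s_1 s_0` occurring in `s_{β0}` and in the maps `π`. -/
def hh : Matrix (Fin 5) (Fin 5) ℤ :=
  !![-1,0,1,0,0;
     0,-1,1,0,0;
     0,0,1,0,0;
     0,0,1,-1,0;
     0,0,1,0,-1]

lemma hh_eq : T4 * T3 * T1 * T0 = hh := by decide

lemma hh_sq : hh * hh = 1 := by decide

lemma isIsom_hh : IsIsom hh := by unfold IsIsom; decide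

lemma isIsom_Sg1 : IsIsom Sg1 := by unfold IsIsom; decide

lemma isIsom_Sg2 : IsIsom Sg2 := by unfold IsIsom; decide

lemma isIsom_Sg3 : IsIsom Sg3 := isIsom_Sg1.mul isIsom_Sg2

lemma isIsom_T0 : IsIsom T0 := by unfold IsIsom; decide

lemma isIsom_T1 : IsIsom T1 := by unfold IsIsom; decide

lemma isIsom_T3 : IsIsom T3 := by unfold IsIsom; decide

lemma isIsom_T4 : IsIsom T4 := by unfold IsIsom; decide

lemma isIsom_r1 : IsIsom r1 := isIsom_T1.mul isIsom_T4

lemma isIsom_r2 : IsIsom r2 := isIsom_T1.mul isIsom_T3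

lemma sB_eq (i : Fin 2) : sB i = rootRefl (rB i) := by
  fin_cases i
  · change sb0 = rootRefl be0
    have h := isIsom_hh.conj_T2 hh_sq (β := be0) (by decide)
    rw [← hh_eq] at h
    simpa only [sb0, Matrix.mul_assoc] using h
  · change T2 = rootRefl be1
    decide

lemma sG_eq (i : Fin 2) : sG i = rootRefl (rG i) := by
  fin_cases i
  · change sg0 = rootRefl ga0
    have h := (isIsom_T0.mul isIsom_T3).conj_T2 (k := T0 * T3) (β := ga0) (by decide) (by decide)
    simpa only [sg0, Matrix.mul_assoc] using h
  · change sg1 = rootRefl ga1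
    have h := (isIsom_T1.mul isIsom_T4).conj_T2 (k := T1 * T4) (β := ga1) (by decide) (by decide)
    simpa only [sg1, Matrix.mul_assoc] using h

lemma sZ_eq (i : Fin 2) : sZ i = rootRefl (rZ i) := by
  fin_cases i
  · change sz0 = rootRefl ze0
    have h := (isIsom_Sg2.mul (isIsom_T1.mul isIsom_T3)).conj_T2 (k := T1 * T3 * Sg2) (β := ze0)
      (by decide) (by decide)
    simpa only [sz0, Matrix.mul_assoc] using h
  · change sz1 = rootRefl ze1
    have h := (isIsom_T1.mul isIsom_T3).conj_T2 (k := T1 * T3) (β := ze1) (by decide) (by decide)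
    simpa only [sz1, Matrix.mul_assoc] using h

lemma sM_eq (i : Fin 2) : sM i = rootRefl (rM i) := by
  fin_cases i
  · change sm0 = rootRefl mu0
    have h := (isIsom_T0.mul isIsom_T1).conj_T2 (k := T0 * T1) (β := mu0) (by decide) (by decide)
    simpa only [sm0, Matrix.mul_assoc] using h
  · change sm1 = rootRefl mu1
    have h := (isIsom_T3.mul isIsom_T4).conj_T2 (k := T3 * T4) (β := mu1) (by decide) (by decide)
    simpa only [sm1, Matrix.mul_assoc] using h

/-! ### The maps `π` -/

lemma pbg_eq : pbg = Sg2 * hh := by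
  rw [← hh_eq]; simp only [pbg, Matrix.mul_assoc]

lemma pbz_eq : pbz = Sg3 * hh := by
  rw [← hh_eq]; simp only [pbz, Matrix.mul_assoc]

lemma pbm_eq : pbm = Sg1 * hh := by
  rw [← hh_eq]; simp only [pbm, Matrix.mul_assoc]

lemma isIsom_pbg : IsIsom pbg := pbg_eq ▸ isIsom_Sg2.mul isIsom_hh

lemma isIsom_pbz : IsIsom pbz := pbz_eq ▸ isIsom_Sg3.mul isIsom_hh

lemma isIsom_pbm : IsIsom pbm := pbm_eq ▸ isIsom_Sg1.mul isIsom_hh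

/-- If `t` commutes with the involution `hh`, the factors `hh` cancel from a product of two maps
of the form `s hh`. -/
lemma mul_hh_mul_mul_hh (s : Matrix (Fin 5) (Fin 5) ℤ) {t : Matrix (Fin 5) (Fin 5) ℤ}
    (h : Commute t hh) : s * hh * (t * hh) = s * t := by
  rw [h.eq, Matrix.mul_assoc, ← Matrix.mul_assoc hh hh t, hh_sq, Matrix.one_mul]

lemma commute_Sg1_hh : Commute Sg1 hh := by
  change Sg1 * hh = hh * Sg1
  decide

lemma commute_Sg2_hh : Commute Sg2 hh := by
  change Sg2 * hh = hh * Sg2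
  decide

lemma commute_Sg3_hh : Commute Sg3 hh := commute_Sg1_hh.mul_left commute_Sg2_hh

/-- the fundamental relations of the extended affine Weyl group of type
`4A_1^(1)` hold among the composite maps (note `1 - i` is the index flip on `Fin 2`). -/
theorem statement11 :
    (∀ i : Fin 2, sB i * sB i = 1 ∧ sG i * sG i = 1 ∧ sZ i * sZ i = 1 ∧ sM i * sM i = 1) ∧
    (∀ i j : Fin 2,
      sB i * sG j = sG j * sB i ∧ sB i * sZ j = sZ j * sB i ∧ sB i * sM j = sM j * sB i ∧
      sG i * sZ j = sZ j * sG i ∧ sG i * sM j = sM j * sG i ∧ sZ i * sM j = sM j * sZ i) ∧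
    pbg * pbg = 1 ∧ pbz * pbz = 1 ∧ pbm * pbm = 1 ∧
    pgz * pgz = 1 ∧ pgm * pgm = 1 ∧ pzm * pzm = 1 ∧
    pgz = pbg * pbz ∧ pgm = pbg * pbm ∧ pzm = pbz * pbm ∧
    pbg * pbz = pbz * pbg ∧ pbg * pbm = pbm * pbg ∧ pbz * pbm = pbm * pbz ∧
    r1 * r1 = 1 ∧ r2 * r2 = 1 ∧ r3 * r3 = 1 ∧ r3 = r1 * r2 ∧ r3 = r2 * r1 ∧
    (∀ i : Fin 2,
      pbg * sB i = sB (1 - i) * pbg ∧ pbg * sG i = sG (1 - i) * pbg ∧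
      pbg * sZ i = sZ i * pbg ∧ pbg * sM i = sM i * pbg) ∧
    (∀ i : Fin 2,
      pbz * sB i = sB (1 - i) * pbz ∧ pbz * sZ i = sZ (1 - i) * pbz ∧
      pbz * sG i = sG i * pbz ∧ pbz * sM i = sM i * pbz) ∧
    (∀ i : Fin 2,
      pbm * sB i = sB (1 - i) * pbm ∧ pbm * sM i = sM (1 - i) * pbm ∧
      pbm * sG i = sG i * pbm ∧ pbm * sZ i = sZ i * pbm) ∧
    (∀ i : Fin 2,
      r1 * sB i = sG i * r1 ∧ r1 * sG i = sB i * r1 ∧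
      r1 * sZ i = sM i * r1 ∧ r1 * sM i = sZ i * r1) ∧
    (∀ i : Fin 2,
      r2 * sB i = sZ i * r2 ∧ r2 * sZ i = sB i * r2 ∧
      r2 * sG i = sM i * r2 ∧ r2 * sM i = sG i * r2) := by
  have hbg : ∀ s, s * hh * pbg = s * Sg2 := fun s => by
    rw [pbg_eq, mul_hh_mul_mul_hh s commute_Sg2_hh]
  have hbz : ∀ s, s * hh * pbz = s * Sg3 := fun s => by
    rw [pbz_eq, mul_hh_mul_mul_hh s commute_Sg3_hh]
  have hbm : ∀ s, s * hh * pbm = s * Sg1 := fun s => by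
    rw [pbm_eq, mul_hh_mul_mul_hh s commute_Sg1_hh]
  have hgg : pbg * pbg = Sg2 * Sg2 := (congrArg (· * pbg) pbg_eq).trans (hbg _)
  have hgz : pbg * pbz = Sg2 * Sg3 := (congrArg (· * pbz) pbg_eq).trans (hbz _)
  have hgm : pbg * pbm = Sg2 * Sg1 := (congrArg (· * pbm) pbg_eq).trans (hbm _)
  have hzg : pbz * pbg = Sg3 * Sg2 := (congrArg (· * pbg) pbz_eq).trans (hbg _)
  have hzz : pbz * pbz = Sg3 * Sg3 := (congrArg (· * pbz) pbz_eq).trans (hbz _)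
  have hzm : pbz * pbm = Sg3 * Sg1 := (congrArg (· * pbm) pbz_eq).trans (hbm _)
  have hmg : pbm * pbg = Sg1 * Sg2 := (congrArg (· * pbg) pbm_eq).trans (hbg _)
  have hmz : pbm * pbz = Sg1 * Sg3 := (congrArg (· * pbz) pbm_eq).trans (hbz _)
  have hmm : pbm * pbm = Sg1 * Sg1 := (congrArg (· * pbm) pbm_eq).trans (hbm _)
  simp only [hgg, hgz, hgm, hzg, hzz, hzm, hmg, hmz, hmm, sB_eq, sG_eq, sZ_eq, sM_eq]
  refine ⟨fun i => ⟨?_, ?_, ?_, ?_⟩, fun i j => ⟨?_, ?_, ?_, ?_, ?_, ?_⟩,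
    by decide, by decide, by decide, by decide, by decide, by decide, by decide, by decide,
    by decide, by decide, by decide, by decide, by decide, by decide, by decide, by decide,
    by decide, fun i => ⟨?_, ?_, ?_, ?_⟩, fun i => ⟨?_, ?_, ?_, ?_⟩, fun i => ⟨?_, ?_, ?_, ?_⟩,
    fun i => ⟨?_, ?_, ?_, ?_⟩, fun i => ⟨?_, ?_, ?_, ?_⟩⟩
  iterate 4 exact rootRefl_mul_self (by revert i; decide)
  iterate 6 exact rootRefl_comm (by revert i j; decide) (by revert i j; decide)
  iterate 4 exact isIsom_pbg.mul_rootRefl (by rw [pbg_eq]; revert i; decide)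
  iterate 4 exact isIsom_pbz.mul_rootRefl (by rw [pbz_eq]; revert i; decide)
  iterate 4 exact isIsom_pbm.mul_rootRefl (by rw [pbm_eq]; revert i; decide)
  iterate 4 exact isIsom_r1.mul_rootRefl (by revert i; decide)
  iterate 4 exact isIsom_r2.mul_rootRefl (by revert i; decide)
end

section
/- The map S_{β0} is an involution: S_{β0}∘S_{β0} = id on F. Equivalently, substituting β_0 ↦ −β_0, z_0 ↦ R_0, z_2 ↦ R_2 (with z_1, z_12, γ_0, ζ_0, μ_0 unchanged) into the rational functions R_0 and R_2 returns z_0 and z_2 respectively. -/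
/-! As a function of `z_0` alone, `R_0` is the Möbius transformation
`z_0 ↦ (A + B z_0) / (C z_0 + D)` with `A = 2 β_0 z_1 z_12`, `C = 2 β_0` and
`B = -(β_0+γ_0+ζ_0-μ_0) z_1 + (β_0-γ_0+ζ_0+μ_0) z_12`,
`D = (β_0-γ_0-ζ_0+μ_0) z_1 - (β_0+γ_0-ζ_0-μ_0) z_12`.
The sign change `β_0 ↦ -β_0` sends `(A, B, C, D)` to `(-A, D, -C, B)`, which are the coefficients of
the inverse transformation, so `S R_0 = z_0`. The same holds for `R_2`, with `(A, -B, C, -D)` in place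
of `(A, B, C, D)`. Both transformations have determinant `B D - A C`; this determinant and the
denominators of `R_0` and `R_2` are nonzero because they are polynomials with a nonzero value at the
point `β_0 = z_1 = 1`, all other coordinates `0` (`F8.algebraMap_ne_zero_of_eval`).
Finally, a ring endomorphism of `F` fixing the eight indeterminates is the identity. -/

/-- `F = ℚ(β_0, γ_0, ζ_0, μ_0, z_0, z_1, z_2, z_12)`: the field of rational functions
in eight indeterminates over `ℚ`, realized as the fraction field of the polynomial
ring in eight variables. -/
abbrev F8 : Type := FractionRing (MvPolynomial (Fin 8) ℚ)

/-- The eight indeterminates as elements of `F`; indices `0,…,7` correspond to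
`β_0, γ_0, ζ_0, μ_0, z_0, z_1, z_2, z_12` respectively. -/
noncomputable def Xv (i : Fin 8) : F8 :=
  algebraMap (MvPolynomial (Fin 8) ℚ) F8 (MvPolynomial.X i)

/-- `β_0`. -/
noncomputable def vb0 : F8 := Xv 0
/-- `γ_0`. -/
noncomputable def vg0 : F8 := Xv 1
/-- `ζ_0`. -/
noncomputable def vz0 : F8 := Xv 2
/-- `μ_0`. -/
noncomputable def vm0 : F8 := Xv 3
/-- `z_0`. -/
noncomputable def w0 : F8 := Xv 4
/-- `z_1`. -/
noncomputable def w1 : F8 := Xv 5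
/-- `z_2`. -/
noncomputable def w2 : F8 := Xv 6
/-- `z_12`. -/
noncomputable def w12 : F8 := Xv 7

/-- `R_0`, the image of `z_0` under `S_{β0}`. -/
noncomputable def R0 : F8 :=
  (2*vb0*w1*w12 - (vb0+vg0+vz0-vm0)*w0*w1 + (vb0-vg0+vz0+vm0)*w0*w12) /
  (2*vb0*w0 + (vb0-vg0-vz0+vm0)*w1 - (vb0+vg0-vz0-vm0)*w12)

/-- `R_2`, the image of `z_2` under `S_{β0}`. -/
noncomputable def R2 : F8 :=
  (2*vb0*w1*w12 + (vb0+vg0+vz0-vm0)*w1*w2 - (vb0-vg0+vz0+vm0)*w2*w12) /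
  (2*vb0*w2 - (vb0-vg0-vz0+vm0)*w1 + (vb0+vg0-vz0-vm0)*w12)

/-- The inverse of the Möbius transformation `x ↦ (a + b x) / (c x + d)`. -/
lemma mobius_inverse {K : Type*} [Field K] {a b c d x : K} (hx : c * x + d ≠ 0)
    (hdet : b * d - a * c ≠ 0) :
    (-a + d * ((a + b * x) / (c * x + d))) / (-c * ((a + b * x) / (c * x + d)) + b) = x := by
  have hden : -c * ((a + b * x) / (c * x + d)) + b = (b * d - a * c) / (c * x + d) := by
    field_simp
    ring
  have hnum : -a + d * ((a + b * x) / (c * x + d)) = x * ((b * d - a * c) / (c * x + d)) := by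
    rw [← mul_div_assoc, ← mul_div_assoc, eq_div_iff hx, add_mul, div_mul_cancel₀ _ hx]
    ring
  rw [hden, hnum, mul_div_cancel_right₀ _ (div_ne_zero hdet hx)]

lemma F8.algebraMap_ne_zero_of_eval (p : MvPolynomial (Fin 8) ℚ) (v : Fin 8 → ℚ)
    (h : MvPolynomial.eval v p ≠ 0) : algebraMap (MvPolynomial (Fin 8) ℚ) F8 p ≠ 0 := by
  intro h0
  have hp : p = 0 := (map_eq_zero_iff _ (IsFractionRing.injective _ F8)).1 h0
  exact h (by rw [hp, map_zero])

lemma F8.ringHom_eq_id (T : F8 →+* F8) (h : ∀ i, T (Xv i) = Xv i) : T = RingHom.id F8 := by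
  apply IsLocalization.ringHom_ext (nonZeroDivisors (MvPolynomial (Fin 8) ℚ))
  apply MvPolynomial.ringHom_ext'
  · exact Subsingleton.elim _ _
  · exact h

open MvPolynomial in
lemma R0_denom_ne_zero :
    2*vb0*w0 + ((vb0-vg0-vz0+vm0)*w1 - (vb0+vg0-vz0-vm0)*w12) ≠ 0 := by
  have h := F8.algebraMap_ne_zero_of_eval
    (2*X 0*X 4 + ((X 0-X 1-X 2+X 3)*X 5 - (X 0+X 1-X 2-X 3)*X 7))
    ![1, 0, 0, 0, 0, 1, 0, 0] (by simp)
  simpa only [map_add, map_sub, map_mul, map_ofNat,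
    vb0, vg0, vz0, vm0, w0, w1, w2, w12, Xv] using h

open MvPolynomial in
lemma R2_denom_ne_zero :
    2*vb0*w2 + -((vb0-vg0-vz0+vm0)*w1 - (vb0+vg0-vz0-vm0)*w12) ≠ 0 := by
  have h := F8.algebraMap_ne_zero_of_eval
    (2*X 0*X 6 + -((X 0-X 1-X 2+X 3)*X 5 - (X 0+X 1-X 2-X 3)*X 7))
    ![1, 0, 0, 0, 0, 1, 0, 0] (by simp)
  simpa only [map_add, map_sub, map_mul, map_neg, map_ofNat,
    vb0, vg0, vz0, vm0, w0, w1, w2, w12, Xv] using h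

open MvPolynomial in
/-- The common determinant `B D - A C` of the two Möbius transformations is nonzero. -/
lemma mobius_det_ne_zero :
    (-(vb0+vg0+vz0-vm0)*w1 + (vb0-vg0+vz0+vm0)*w12) *
      ((vb0-vg0-vz0+vm0)*w1 - (vb0+vg0-vz0-vm0)*w12) - (2*vb0*w1*w12) * (2*vb0) ≠ 0 := by
  have h := F8.algebraMap_ne_zero_of_eval
    ((-(X 0+X 1+X 2-X 3)*X 5 + (X 0-X 1+X 2+X 3)*X 7) *
      ((X 0-X 1-X 2+X 3)*X 5 - (X 0+X 1-X 2-X 3)*X 7) - (2*X 0*X 5*X 7) * (2*X 0))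
    ![1, 0, 0, 0, 0, 1, 0, 0] (by simp)
  simpa only [map_add, map_sub, map_mul, map_neg, map_ofNat,
    vb0, vg0, vz0, vm0, w0, w1, w2, w12, Xv] using h

/-- the map `S_{β0}` — i.e. any ring homomorphism `F → F` acting on the
generators by `β_0 ↦ -β_0`, `z_0 ↦ R_0`, `z_2 ↦ R_2` and fixing `γ_0, ζ_0, μ_0, z_1, z_12`
(such a homomorphism automatically fixes `ℚ`) — is an involution: `S_{β0} ∘ S_{β0} = id`. -/
theorem statement13 (S : F8 →+* F8)
    (hb : S vb0 = -vb0) (hg : S vg0 = vg0) (hz : S vz0 = vz0) (hm : S vm0 = vm0)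
    (h0 : S w0 = R0) (h1 : S w1 = w1) (h2 : S w2 = R2) (h12 : S w12 = w12) :
    S.comp S = RingHom.id F8 := by
  have hR0 : S R0 = w0 := by
    have key := mobius_inverse R0_denom_ne_zero mobius_det_ne_zero
    have e : R0 = (2*vb0*w1*w12 + (-(vb0+vg0+vz0-vm0)*w1 + (vb0-vg0+vz0+vm0)*w12) * w0) /
        (2*vb0*w0 + ((vb0-vg0-vz0+vm0)*w1 - (vb0+vg0-vz0-vm0)*w12)) := by
      unfold R0
      congr 1 <;> ring
    rw [← e] at key
    refine Eq.trans ?_ key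
    conv_lhs => unfold R0
    simp only [map_div₀, map_add, map_sub, map_mul, map_ofNat, hb, hg, hz, hm, h0, h1, h12]
    congr 1 <;> ring
  have hR2 : S R2 = w2 := by
    have hdet : -(-(vb0+vg0+vz0-vm0)*w1 + (vb0-vg0+vz0+vm0)*w12) *
        -((vb0-vg0-vz0+vm0)*w1 - (vb0+vg0-vz0-vm0)*w12) - (2*vb0*w1*w12) * (2*vb0) ≠ 0 := by
      rw [neg_mul_neg]
      exact mobius_det_ne_zero
    have key := mobius_inverse R2_denom_ne_zero hdet
    have e : R2 = (2*vb0*w1*w12 + -(-(vb0+vg0+vz0-vm0)*w1 + (vb0-vg0+vz0+vm0)*w12) * w2) /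
        (2*vb0*w2 + -((vb0-vg0-vz0+vm0)*w1 - (vb0+vg0-vz0-vm0)*w12)) := by
      unfold R2
      congr 1 <;> ring
    rw [← e] at key
    refine Eq.trans ?_ key
    conv_lhs => unfold R2
    simp only [map_div₀, map_add, map_sub, map_mul, map_ofNat, hb, hg, hz, hm, h1, h2, h12]
    congr 1 <;> ring
  have hbb : S (S vb0) = vb0 := by rw [hb, map_neg, hb, neg_neg]
  have hgg : S (S vg0) = vg0 := by rw [hg, hg]
  have hzz : S (S vz0) = vz0 := by rw [hz, hz]
  have hmm : S (S vm0) = vm0 := by rw [hm, hm]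
  have h00 : S (S w0) = w0 := by rw [h0, hR0]
  have h11 : S (S w1) = w1 := by rw [h1, h1]
  have h22 : S (S w2) = w2 := by rw [h2, hR2]
  have h1212 : S (S w12) = w12 := by rw [h12, h12]
  apply F8.ringHom_eq_id
  intro i
  fin_cases i
  exacts [hbb, hgg, hzz, hmm, h00, h11, h22, h1212]
end
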